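/- Fundamental lemma of the coeffect logical relation: for all γ and Γ, (1) if γ·Γ ⊢ V : A then γ·Γ ⊨ V : A, and (2) if γ·Γ ⊢ M : B then γ·Γ ⊨ M : B. -/

import Mathlib

set_option autoImplicit false

/-- A preordered semiring of grades `(Q, +, 0, ·, 1, ≤co)`,
where `≤co` is a preorder respected by `+` and `·`. -/
structure CoSig (Q : Type) where
  add : Q → Q → Q
  zero : Q
  mul : Q → Q → Q
  one : Q
  le : Q → Q → Prop
  add_assoc : ∀ a b c, add (add a b) c = add a (add b c)
  add_comm : ∀ a b, add a b = add b a
  add_zero : ∀ a, add a zero = a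
  mul_assoc : ∀ a b c, mul (mul a b) c = mul a (mul b c)
  one_mul : ∀ a, mul one a = a
  mul_one : ∀ a, mul a one = a
  zero_mul : ∀ a, mul zero a = zero
  mul_zero : ∀ a, mul a zero = zero
  left_distrib : ∀ a b c, mul a (add b c) = add (mul a b) (mul a c)
  right_distrib : ∀ a b c, mul (add a b) c = add (mul a c) (mul b c)
  le_refl : ∀ a, le a a
  le_trans : ∀ a b c, le a b → le b c → le a c
  add_le_add : ∀ a b c d, le a b → le c d → le (add a c) (add b d)
  mul_le_mul : ∀ a b c d, le a b → le c d → le (mul a c) (mul b d)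

namespace CBPVCo

/-- Pointwise comparison of grade vectors: `γ₁ ≤co γ₂`. -/
def vle {Q : Type} (S : CoSig Q) (γ₁ γ₂ : List Q) : Prop := List.Forall₂ S.le γ₁ γ₂

/-- Pointwise addition of grade vectors. -/
def vadd {Q : Type} (S : CoSig Q) (γ₁ γ₂ : List Q) : List Q := List.zipWith S.add γ₁ γ₂

/-- Pointwise scaling of a grade vector: `q·γ`. -/
def vscale {Q : Type} (S : CoSig Q) (q : Q) (γ : List Q) : List Q := γ.map (S.mul q)

/-- `γ ≤co 0̄`: every entry of the grade vector is discardable. -/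
def leZero {Q : Type} (S : CoSig Q) (γ : List Q) : Prop := ∀ q ∈ γ, S.le q S.zero

mutual
/-- CBPV value types (coeffect version): `unit`, thunks `U B`, positive products. -/
inductive VTy (Q : Type) : Type where
  | unit : VTy Q
  | thunk : CTy Q → VTy Q
  | prod : VTy Q → VTy Q → VTy Q
/-- CBPV computation types (coeffect version): graded functions `A^q → B`,
graded returners `F_q A`, negative products. -/
inductive CTy (Q : Type) : Type where
  | arr : VTy Q → Q → CTy Q → CTy Q
  | F : Q → VTy Q → CTy Q
  | wth : CTy Q → CTy Q → CTy Q
end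

mutual
/-- CBPV values (de Bruijn indices for variables). -/
inductive Val (Q : Type) : Type where
  | var : Nat → Val Q
  | unit : Val Q
  | thunk : Comp Q → Val Q
  | pair : Val Q → Val Q → Val Q
/-- CBPV computations, with grade annotations on binders and on `return`. -/
inductive Comp (Q : Type) : Type where
  | lam : Q → Comp Q → Comp Q
  | app : Comp Q → Val Q → Comp Q
  | force : Val Q → Comp Q
  | split : Q → Val Q → Comp Q → Comp Q
  | cpair : Comp Q → Comp Q → Comp Q
  | fst : Comp Q → Comp Q
  | snd : Comp Q → Comp Q
  | ret : Q → Val Q → Comp Q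
  | letin : Q → Comp Q → Comp Q → Comp Q
end

mutual
/-- The value typing judgment `γ·Γ ⊢ V : A` of the CBPV type-and-coeffect system. -/
inductive VHasTy {Q : Type} (S : CoSig Q) : List Q → List (VTy Q) → Val Q → VTy Q → Prop where
  | var : ∀ {γ : List Q} {Γ : List (VTy Q)} {x : Nat} {q : Q} {A : VTy Q},
      γ.length = Γ.length → Γ[x]? = some A → γ[x]? = some q → S.le q S.one →
      (∀ (i : Nat) (q' : Q), i ≠ x → γ[i]? = some q' → S.le q' S.zero) →
      VHasTy S γ Γ (.var x) A
  | unit : ∀ {γ : List Q} {Γ : List (VTy Q)},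
      γ.length = Γ.length → leZero S γ → VHasTy S γ Γ .unit .unit
  | thunk : ∀ {γ : List Q} {Γ : List (VTy Q)} {M : Comp Q} {B : CTy Q},
      CHasTy S γ Γ M B → VHasTy S γ Γ (.thunk M) (.thunk B)
  | pair : ∀ {γ γ₁ γ₂ : List Q} {Γ : List (VTy Q)} {V₁ V₂ : Val Q} {A₁ A₂ : VTy Q},
      VHasTy S γ₁ Γ V₁ A₁ → VHasTy S γ₂ Γ V₂ A₂ → vle S γ (vadd S γ₁ γ₂) →
      VHasTy S γ Γ (.pair V₁ V₂) (.prod A₁ A₂)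

/-- The computation typing judgment `γ·Γ ⊢ M : B` of the CBPV type-and-coeffect system. -/
inductive CHasTy {Q : Type} (S : CoSig Q) : List Q → List (VTy Q) → Comp Q → CTy Q → Prop where
  | lam : ∀ {γ : List Q} {Γ : List (VTy Q)} {q : Q} {A : VTy Q} {M : Comp Q} {B : CTy Q},
      CHasTy S (q :: γ) (A :: Γ) M B → CHasTy S γ Γ (.lam q M) (.arr A q B)
  | app : ∀ {γ γ₁ γ₂ : List Q} {Γ : List (VTy Q)} {M : Comp Q} {V : Val Q}
      {A : VTy Q} {q : Q} {B : CTy Q},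
      CHasTy S γ₁ Γ M (.arr A q B) → VHasTy S γ₂ Γ V A →
      vle S γ (vadd S γ₁ (vscale S q γ₂)) → CHasTy S γ Γ (.app M V) B
  | force : ∀ {γ : List Q} {Γ : List (VTy Q)} {V : Val Q} {B : CTy Q},
      VHasTy S γ Γ V (.thunk B) → CHasTy S γ Γ (.force V) B
  | ret : ∀ {γ γ₁ : List Q} {Γ : List (VTy Q)} {q : Q} {V : Val Q} {A : VTy Q},
      VHasTy S γ₁ Γ V A → vle S γ (vscale S q γ₁) → CHasTy S γ Γ (.ret q V) (.F q A)
  | letin : ∀ {γ γ₁ γ₂ : List Q} {Γ : List (VTy Q)} {q₁ q₂ : Q} {M N : Comp Q}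
      {A : VTy Q} {B : CTy Q},
      CHasTy S γ₁ Γ M (.F q₁ A) → CHasTy S (S.mul q₁ q₂ :: γ₂) (A :: Γ) N B →
      vle S γ (vadd S (vscale S q₂ γ₁) γ₂) → CHasTy S γ Γ (.letin q₂ M N) B
  | split : ∀ {γ γ₁ γ₂ : List Q} {Γ : List (VTy Q)} {q : Q} {V : Val Q}
      {A₁ A₂ : VTy Q} {N : Comp Q} {B : CTy Q},
      VHasTy S γ₁ Γ V (.prod A₁ A₂) → CHasTy S (q :: q :: γ₂) (A₂ :: A₁ :: Γ) N B →
      vle S γ (vadd S (vscale S q γ₁) γ₂) → CHasTy S γ Γ (.split q V N) B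
  | cpair : ∀ {γ : List Q} {Γ : List (VTy Q)} {M₁ M₂ : Comp Q} {B₁ B₂ : CTy Q},
      CHasTy S γ Γ M₁ B₁ → CHasTy S γ Γ M₂ B₂ → CHasTy S γ Γ (.cpair M₁ M₂) (.wth B₁ B₂)
  | fst : ∀ {γ : List Q} {Γ : List (VTy Q)} {M : Comp Q} {B₁ B₂ : CTy Q},
      CHasTy S γ Γ M (.wth B₁ B₂) → CHasTy S γ Γ (.fst M) B₁
  | snd : ∀ {γ : List Q} {Γ : List (VTy Q)} {M : Comp Q} {B₁ B₂ : CTy Q},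
      CHasTy S γ Γ M (.wth B₁ B₂) → CHasTy S γ Γ (.snd M) B₂
end

/-- Closed values: closures (capturing a grade vector and an environment),
unit, and pairs of closed values. -/
inductive CloVal (Q : Type) : Type where
  | clo : List Q → List (CloVal Q) → Comp Q → CloVal Q
  | unit : CloVal Q
  | pair : CloVal Q → CloVal Q → CloVal Q

/-- Closed terminal computations. -/
inductive Terminal (Q : Type) : Type where
  | ret : Q → CloVal Q → Terminal Q
  | lamClo : List Q → List (CloVal Q) → Q → Comp Q → Terminal Q
  | cpairClo : List Q → List (CloVal Q) → Comp Q → Comp Q → Terminal Q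

/-- The coeffect-instrumented value judgment `γ·ρ ⊢ V ⇓ W`. -/
inductive EvalVal {Q : Type} (S : CoSig Q) :
    List Q → List (CloVal Q) → Val Q → CloVal Q → Prop where
  | var : ∀ {γ : List Q} {ρ : List (CloVal Q)} {x : Nat} {q : Q} {W : CloVal Q},
      γ.length = ρ.length → ρ[x]? = some W → γ[x]? = some q → S.le q S.one →
      (∀ (i : Nat) (q' : Q), i ≠ x → γ[i]? = some q' → S.le q' S.zero) →
      EvalVal S γ ρ (.var x) W
  | unit : ∀ {γ : List Q} {ρ : List (CloVal Q)},
      γ.length = ρ.length → leZero S γ → EvalVal S γ ρ .unit .unit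
  | thunk : ∀ {γ γ' : List Q} {ρ : List (CloVal Q)} {M : Comp Q},
      vle S γ γ' → EvalVal S γ ρ (.thunk M) (.clo γ' ρ M)
  | pair : ∀ {γ γ₁ γ₂ : List Q} {ρ : List (CloVal Q)} {V₁ V₂ : Val Q} {W₁ W₂ : CloVal Q},
      EvalVal S γ₁ ρ V₁ W₁ → EvalVal S γ₂ ρ V₂ W₂ → vle S γ (vadd S γ₁ γ₂) →
      EvalVal S γ ρ (.pair V₁ V₂) (.pair W₁ W₂)

/-- The coeffect-instrumented big-step judgment `γ·ρ ⊢ M ⇓ T`. -/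
inductive EvalComp {Q : Type} (S : CoSig Q) :
    List Q → List (CloVal Q) → Comp Q → Terminal Q → Prop where
  | lam : ∀ {γ γ' : List Q} {ρ : List (CloVal Q)} {q : Q} {M : Comp Q},
      vle S γ γ' → EvalComp S γ ρ (.lam q M) (.lamClo γ' ρ q M)
  | cpair : ∀ {γ γ' : List Q} {ρ : List (CloVal Q)} {M₁ M₂ : Comp Q},
      vle S γ γ' → EvalComp S γ ρ (.cpair M₁ M₂) (.cpairClo γ' ρ M₁ M₂)
  | ret : ∀ {γ γ₁ : List Q} {ρ : List (CloVal Q)} {q : Q} {V : Val Q} {W : CloVal Q},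
      EvalVal S γ₁ ρ V W → vle S γ (vscale S q γ₁) →
      EvalComp S γ ρ (.ret q V) (.ret q W)
  | app : ∀ {γ γ₁ γ₂ γ' : List Q} {ρ ρ' : List (CloVal Q)} {M M' : Comp Q}
      {V : Val Q} {W : CloVal Q} {q : Q} {T : Terminal Q},
      EvalComp S γ₁ ρ M (.lamClo γ' ρ' q M') → EvalVal S γ₂ ρ V W →
      EvalComp S (q :: γ') (W :: ρ') M' T → vle S γ (vadd S γ₁ (vscale S q γ₂)) →
      EvalComp S γ ρ (.app M V) T
  | force : ∀ {γ γ' : List Q} {ρ ρ' : List (CloVal Q)} {V : Val Q} {M : Comp Q} {T : Terminal Q},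
      EvalVal S γ ρ V (.clo γ' ρ' M) → EvalComp S γ' ρ' M T → EvalComp S γ ρ (.force V) T
  | letin : ∀ {γ γ₁ γ₂ : List Q} {ρ : List (CloVal Q)} {q₁ q₂ : Q} {M N : Comp Q}
      {W : CloVal Q} {T : Terminal Q},
      EvalComp S γ₁ ρ M (.ret q₁ W) → EvalComp S (S.mul q₁ q₂ :: γ₂) (W :: ρ) N T →
      vle S γ (vadd S (vscale S q₂ γ₁) γ₂) → EvalComp S γ ρ (.letin q₂ M N) T
  | split : ∀ {γ γ₁ γ₂ : List Q} {ρ : List (CloVal Q)} {q : Q} {V : Val Q}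
      {W₁ W₂ : CloVal Q} {N : Comp Q} {T : Terminal Q},
      EvalVal S γ₁ ρ V (.pair W₁ W₂) → EvalComp S (q :: q :: γ₂) (W₂ :: W₁ :: ρ) N T →
      vle S γ (vadd S (vscale S q γ₁) γ₂) → EvalComp S γ ρ (.split q V N) T
  | fst : ∀ {γ γ' : List Q} {ρ ρ' : List (CloVal Q)} {M M₁ M₂ : Comp Q} {T : Terminal Q},
      EvalComp S γ ρ M (.cpairClo γ' ρ' M₁ M₂) → EvalComp S γ' ρ' M₁ T →
      EvalComp S γ ρ (.fst M) T
  | snd : ∀ {γ γ' : List Q} {ρ ρ' : List (CloVal Q)} {M M₁ M₂ : Comp Q} {T : Terminal Q},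
      EvalComp S γ ρ M (.cpairClo γ' ρ' M₁ M₂) → EvalComp S γ' ρ' M₂ T →
      EvalComp S γ ρ (.snd M) T

mutual
/-- The logical relation on closed values: `W ∈ 𝒲⟦A⟧`. -/
def WRel {Q : Type} (S : CoSig Q) : VTy Q → CloVal Q → Prop
  | .unit, W => W = CloVal.unit
  | .thunk B, W => ∃ (γ : List Q) (ρ : List (CloVal Q)) (M : Comp Q),
      W = CloVal.clo γ ρ M ∧ ∃ (T : Terminal Q), EvalComp S γ ρ M T ∧ TRel S B T
  | .prod A₁ A₂, W => ∃ (W₁ W₂ : CloVal Q), W = CloVal.pair W₁ W₂ ∧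
      WRel S A₁ W₁ ∧ WRel S A₂ W₂

/-- The logical relation on closed terminals: `T ∈ 𝒯⟦B⟧`. -/
def TRel {Q : Type} (S : CoSig Q) : CTy Q → Terminal Q → Prop
  | .F q A, T => ∃ (W : CloVal Q), T = Terminal.ret q W ∧ WRel S A W
  | .arr A q B, T => ∃ (γ : List Q) (ρ : List (CloVal Q)) (M : Comp Q),
      T = Terminal.lamClo γ ρ q M ∧
      ∀ (W : CloVal Q), WRel S A W →
        ∃ (T' : Terminal Q), EvalComp S (q :: γ) (W :: ρ) M T' ∧ TRel S B T'
  | .wth B₁ B₂, T => ∃ (γ : List Q) (ρ : List (CloVal Q)) (M₁ M₂ : Comp Q),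
      T = Terminal.cpairClo γ ρ M₁ M₂ ∧
      (∃ (T' : Terminal Q), EvalComp S γ ρ M₁ T' ∧ TRel S B₁ T') ∧
      (∃ (T' : Terminal Q), EvalComp S γ ρ M₂ T' ∧ TRel S B₂ T')
end

/-- The logical relation on computations with graded environments: `(γ·ρ, M) ∈ ℳ⟦B⟧`. -/
def MRel {Q : Type} (S : CoSig Q) (B : CTy Q) (γ : List Q) (ρ : List (CloVal Q))
    (M : Comp Q) : Prop :=
  ∃ (T : Terminal Q), EvalComp S γ ρ M T ∧ TRel S B T

/-- The logical relation on values with graded environments: `(γ·ρ, V) ∈ 𝒱⟦A⟧`. -/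
def VRel {Q : Type} (S : CoSig Q) (A : VTy Q) (γ : List Q) (ρ : List (CloVal Q))
    (V : Val Q) : Prop :=
  ∃ (W : CloVal Q), EvalVal S γ ρ V W ∧ WRel S A W

/-- Semantic typing of environments: `Γ ⊨ ρ` — the environment maps every
variable in the domain of `Γ` to a closed value of the expected type. -/
def EnvOk {Q : Type} (S : CoSig Q) (Γ : List (VTy Q)) (ρ : List (CloVal Q)) : Prop :=
  Γ.length = ρ.length ∧
  ∀ (x : Nat) (A : VTy Q), Γ[x]? = some A →
    ∃ (W : CloVal Q), ρ[x]? = some W ∧ WRel S A W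

/-- Semantic typing of values: `γ·Γ ⊨ V : A`. -/
def VSem {Q : Type} (S : CoSig Q) (γ : List Q) (Γ : List (VTy Q)) (V : Val Q)
    (A : VTy Q) : Prop :=
  ∀ (ρ : List (CloVal Q)), EnvOk S Γ ρ → VRel S A γ ρ V

/-- Semantic typing of computations: `γ·Γ ⊨ M : B`. -/
def CSem {Q : Type} (S : CoSig Q) (γ : List Q) (Γ : List (VTy Q)) (M : Comp Q)
    (B : CTy Q) : Prop :=
  ∀ (ρ : List (CloVal Q)), EnvOk S Γ ρ → MRel S B γ ρ M

/-!
Each typing rule has a semantic counterpart with `⊨` in place of `⊢`, and the fundamental lemma is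
a mutual induction over typing derivations that applies these counterparts. An elimination rule
inverts the logical relation at the type of its principal argument, which exposes the closure,
pair or returned value that the matching evaluation rule consumes. Since the evaluation rules
split the grade vector exactly as the typing rules do, the side conditions on grades carry over
verbatim, and reflexivity of `≤co` lets a closure capture the current grade vector.
-/

section

variable {Q : Type} {S : CoSig Q} {γ γ₁ γ₂ : List Q} {Γ : List (VTy Q)} {ρ : List (CloVal Q)}
  {q q₁ q₂ : Q} {V V₁ V₂ : Val Q} {M M₁ M₂ N : Comp Q} {W : CloVal Q} {T : Terminal Q}
  {A A₁ A₂ : VTy Q} {B B₁ B₂ : CTy Q}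

theorem vle_refl (S : CoSig Q) (γ : List Q) : vle S γ γ :=
  List.forall₂_same.2 fun q _ => S.le_refl q

theorem wRel_unit : WRel S .unit W ↔ W = .unit := by
  rw [WRel]

theorem wRel_thunk :
    WRel S (.thunk B) W ↔ ∃ γ ρ M, W = .clo γ ρ M ∧ MRel S B γ ρ M := by
  simp only [WRel, MRel]

theorem wRel_prod :
    WRel S (.prod A₁ A₂) W ↔ ∃ W₁ W₂, W = .pair W₁ W₂ ∧ WRel S A₁ W₁ ∧ WRel S A₂ W₂ := by
  rw [WRel]

theorem tRel_F : TRel S (.F q A) T ↔ ∃ W, T = .ret q W ∧ WRel S A W := by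
  rw [TRel]

theorem tRel_arr :
    TRel S (.arr A q B) T ↔
      ∃ γ ρ M, T = .lamClo γ ρ q M ∧ ∀ W, WRel S A W → MRel S B (q :: γ) (W :: ρ) M := by
  simp only [TRel, MRel]

theorem tRel_wth :
    TRel S (.wth B₁ B₂) T ↔
      ∃ γ ρ M₁ M₂, T = .cpairClo γ ρ M₁ M₂ ∧ MRel S B₁ γ ρ M₁ ∧ MRel S B₂ γ ρ M₂ := by
  simp only [TRel, MRel]

theorem EnvOk.cons (hρ : EnvOk S Γ ρ) (hW : WRel S A W) : EnvOk S (A :: Γ) (W :: ρ) := by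
  refine ⟨congrArg Nat.succ hρ.1, fun x A' hx => ?_⟩
  cases x with
  | zero => exact ⟨W, rfl, Option.some.inj hx ▸ hW⟩
  | succ n => exact hρ.2 n A' hx

theorem VSem.var {x : ℕ} (hlen : γ.length = Γ.length) (hA : Γ[x]? = some A)
    (hq : γ[x]? = some q) (hq_one : S.le q S.one)
    (h_zero : ∀ (i : ℕ) (q' : Q), i ≠ x → γ[i]? = some q' → S.le q' S.zero) :
    VSem S γ Γ (.var x) A := by
  intro ρ hρ
  obtain ⟨W, hW, hWA⟩ := hρ.2 x A hA
  exact ⟨W, .var (hlen.trans hρ.1) hW hq hq_one h_zero, hWA⟩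

theorem VSem.unit (hlen : γ.length = Γ.length) (h_zero : leZero S γ) :
    VSem S γ Γ .unit .unit :=
  fun _ hρ => ⟨.unit, .unit (hlen.trans hρ.1) h_zero, wRel_unit.2 rfl⟩

theorem VSem.thunk (hM : CSem S γ Γ M B) : VSem S γ Γ (.thunk M) (.thunk B) :=
  fun ρ hρ => ⟨.clo γ ρ M, .thunk (vle_refl S γ), wRel_thunk.2 ⟨γ, ρ, M, rfl, hM ρ hρ⟩⟩

theorem VSem.pair (hV₁ : VSem S γ₁ Γ V₁ A₁) (hV₂ : VSem S γ₂ Γ V₂ A₂)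
    (hγ : vle S γ (vadd S γ₁ γ₂)) : VSem S γ Γ (.pair V₁ V₂) (.prod A₁ A₂) := by
  intro ρ hρ
  obtain ⟨W₁, eval_V₁, hW₁⟩ := hV₁ ρ hρ
  obtain ⟨W₂, eval_V₂, hW₂⟩ := hV₂ ρ hρ
  exact ⟨.pair W₁ W₂, .pair eval_V₁ eval_V₂ hγ, wRel_prod.2 ⟨W₁, W₂, rfl, hW₁, hW₂⟩⟩

theorem CSem.lam (hM : CSem S (q :: γ) (A :: Γ) M B) : CSem S γ Γ (.lam q M) (.arr A q B) :=
  fun ρ hρ => ⟨.lamClo γ ρ q M, .lam (vle_refl S γ),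
    tRel_arr.2 ⟨γ, ρ, M, rfl, fun W hW => hM (W :: ρ) (hρ.cons hW)⟩⟩

theorem CSem.app (hM : CSem S γ₁ Γ M (.arr A q B)) (hV : VSem S γ₂ Γ V A)
    (hγ : vle S γ (vadd S γ₁ (vscale S q γ₂))) : CSem S γ Γ (.app M V) B := by
  intro ρ hρ
  obtain ⟨_, eval_M, hT⟩ := hM ρ hρ
  obtain ⟨W, eval_V, hW⟩ := hV ρ hρ
  obtain ⟨_, _, _, rfl, h_body⟩ := tRel_arr.1 hT
  obtain ⟨T, eval_body, hTB⟩ := h_body W hW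
  exact ⟨T, .app eval_M eval_V eval_body hγ, hTB⟩

theorem CSem.force (hV : VSem S γ Γ V (.thunk B)) : CSem S γ Γ (.force V) B := by
  intro ρ hρ
  obtain ⟨_, eval_V, hW⟩ := hV ρ hρ
  obtain ⟨_, _, _, rfl, T, eval_body, hTB⟩ := wRel_thunk.1 hW
  exact ⟨T, .force eval_V eval_body, hTB⟩

theorem CSem.ret (hV : VSem S γ₁ Γ V A) (hγ : vle S γ (vscale S q γ₁)) :
    CSem S γ Γ (.ret q V) (.F q A) := by
  intro ρ hρ
  obtain ⟨W, eval_V, hW⟩ := hV ρ hρ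
  exact ⟨.ret q W, .ret eval_V hγ, tRel_F.2 ⟨W, rfl, hW⟩⟩

theorem CSem.letin (hM : CSem S γ₁ Γ M (.F q₁ A))
    (hN : CSem S (S.mul q₁ q₂ :: γ₂) (A :: Γ) N B)
    (hγ : vle S γ (vadd S (vscale S q₂ γ₁) γ₂)) : CSem S γ Γ (.letin q₂ M N) B := by
  intro ρ hρ
  obtain ⟨_, eval_M, hT⟩ := hM ρ hρ
  obtain ⟨W, rfl, hW⟩ := tRel_F.1 hT
  obtain ⟨T, eval_N, hTB⟩ := hN (W :: ρ) (hρ.cons hW)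
  exact ⟨T, .letin eval_M eval_N hγ, hTB⟩

theorem CSem.split (hV : VSem S γ₁ Γ V (.prod A₁ A₂))
    (hN : CSem S (q :: q :: γ₂) (A₂ :: A₁ :: Γ) N B)
    (hγ : vle S γ (vadd S (vscale S q γ₁) γ₂)) : CSem S γ Γ (.split q V N) B := by
  intro ρ hρ
  obtain ⟨_, eval_V, hW⟩ := hV ρ hρ
  obtain ⟨W₁, W₂, rfl, hW₁, hW₂⟩ := wRel_prod.1 hW
  obtain ⟨T, eval_N, hTB⟩ := hN (W₂ :: W₁ :: ρ) ((hρ.cons hW₁).cons hW₂)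
  exact ⟨T, .split eval_V eval_N hγ, hTB⟩

theorem CSem.cpair (hM₁ : CSem S γ Γ M₁ B₁) (hM₂ : CSem S γ Γ M₂ B₂) :
    CSem S γ Γ (.cpair M₁ M₂) (.wth B₁ B₂) :=
  fun ρ hρ => ⟨.cpairClo γ ρ M₁ M₂, .cpair (vle_refl S γ),
    tRel_wth.2 ⟨γ, ρ, M₁, M₂, rfl, hM₁ ρ hρ, hM₂ ρ hρ⟩⟩

theorem CSem.fst (hM : CSem S γ Γ M (.wth B₁ B₂)) : CSem S γ Γ (.fst M) B₁ := by
  intro ρ hρ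
  obtain ⟨_, eval_M, hT⟩ := hM ρ hρ
  obtain ⟨_, _, _, _, rfl, ⟨T, eval_fst, hTB₁⟩, _⟩ := tRel_wth.1 hT
  exact ⟨T, .fst eval_M eval_fst, hTB₁⟩

theorem CSem.snd (hM : CSem S γ Γ M (.wth B₁ B₂)) : CSem S γ Γ (.snd M) B₂ := by
  intro ρ hρ
  obtain ⟨_, eval_M, hT⟩ := hM ρ hρ
  obtain ⟨_, _, _, _, rfl, _, ⟨T, eval_snd, hTB₂⟩⟩ := tRel_wth.1 hT
  exact ⟨T, .snd eval_M eval_snd, hTB₂⟩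

end

mutual

theorem VHasTy.vSem {Q : Type} {S : CoSig Q} {γ : List Q} {Γ : List (VTy Q)} {V : Val Q}
    {A : VTy Q} : VHasTy S γ Γ V A → VSem S γ Γ V A
  | .var hlen hA hq hq_one h_zero => VSem.var hlen hA hq hq_one h_zero
  | .unit hlen h_zero => VSem.unit hlen h_zero
  | .thunk hM => VSem.thunk hM.cSem
  | .pair hV₁ hV₂ hγ => VSem.pair hV₁.vSem hV₂.vSem hγ

theorem CHasTy.cSem {Q : Type} {S : CoSig Q} {γ : List Q} {Γ : List (VTy Q)} {M : Comp Q}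
    {B : CTy Q} : CHasTy S γ Γ M B → CSem S γ Γ M B
  | .lam hM => CSem.lam hM.cSem
  | .app hM hV hγ => CSem.app hM.cSem hV.vSem hγ
  | .force hV => CSem.force hV.vSem
  | .ret hV hγ => CSem.ret hV.vSem hγ
  | .letin hM hN hγ => CSem.letin hM.cSem hN.cSem hγ
  | .split hV hN hγ => CSem.split hV.vSem hN.cSem hγ
  | .cpair hM₁ hM₂ => CSem.cpair hM₁.cSem hM₂.cSem
  | .fst hM => CSem.fst hM.cSem
  | .snd hM => CSem.snd hM.cSem

end

/-- Fundamental lemma of the coeffect logical relation: syntactic type-and-coeffect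
typing implies semantic typing, for values and for computations. -/
theorem fundamental_lemma {Q : Type} (S : CoSig Q) :
    (∀ {γ : List Q} {Γ : List (VTy Q)} {V : Val Q} {A : VTy Q},
      VHasTy S γ Γ V A → VSem S γ Γ V A) ∧
    (∀ {γ : List Q} {Γ : List (VTy Q)} {M : Comp Q} {B : CTy Q},
      CHasTy S γ Γ M B → CSem S γ Γ M B) :=
  ⟨VHasTy.vSem, CHasTy.cSem⟩

end CBPVCo
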